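/- arXiv:2507.01529 — 3 statements merged into one kernel-verified Lean document; each statement's English description precedes it below -/
import Mathlib

section
/- Let k be a positive integer and let p be a prime with p ≡ 5 (mod 6). Let r be a nonnegative integer such that p divides 6r+5. Then for all integers n ≥ 0, B̄_{2,9}( 18p^{k+1} n + 18pr + 15p ) ≡ (−p) · B̄_{2,9}( 18p^{k−1} n + (18r+15)/p ) (mod 3). -/
/-- `biregOverpartitions l1 l2 n` is the number of `(l1, l2)`-biregular overpartitions of `n`:
overpartitions of `n` (partitions in which the first occurrence of each part size may be
overlined) none of whose parts is divisible by `l1` or by `l2`.  Each partition of `n` with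
admissible parts contributes `2 ^ (number of distinct part sizes)` overpartitions,
corresponding to the choice of which part sizes have their first occurrence overlined. -/
def biregOverpartitions (l1 l2 n : ℕ) : ℕ :=
  ∑ p : Nat.Partition n,
    if ∀ x ∈ p.parts, ¬ l1 ∣ x ∧ ¬ l2 ∣ x then 2 ^ p.parts.toFinset.card else 0

open Finset PowerSeries

/-- The `n`-th term of the series `∑ (q^(m+1); q)_n / (-q^(m+1); q)_(n+1) * q^((m+1) * n)`, where
`v i` stands for the inverse of `1 + q ^ (i + 1)`. -/
def gaussTerm {R : Type*} [CommRing R] (q : R) (v : ℕ → R) (m n : ℕ) : R :=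
  (∏ i ∈ range n, (1 - q ^ (m + i + 1))) * (∏ i ∈ range (n + 1), v (m + i)) * q ^ ((m + 1) * n)

section
variable {R : Type*} [CommRing R] {q : R} {v : ℕ → R}

theorem sum_gaussTerm_add_sum_gaussTerm_succ (hv : ∀ i, v i * (1 + q ^ (i + 1)) = 1) (m N : ℕ) :
    ∑ n ∈ range (N + 1), gaussTerm q v m n
        + q ^ (2 * m + 3) * ∑ n ∈ range (N + 1), gaussTerm q v (m + 1) n
      = 1 - (∏ i ∈ range N, (1 - q ^ (m + i + 2))) * q ^ ((m + 1) * (N + 1))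
          * (1 - q ^ (2 * m + N + 3)) * ∏ i ∈ range (N + 2), v (m + i) := by
  induction N with
  | zero =>
    simp only [gaussTerm, zero_add, sum_range_one, prod_range_zero, prod_range_succ, add_zero]
    have h0 := hv m
    have h1 := hv (m + 1)
    generalize v m = a at *
    generalize v (m + 1) = b at *
    have e : q ^ (m + 1 + 1) = q ^ (m + 1) * q := by ring
    have e2 : q ^ (2 * m + 3) = q ^ (m + 1) * q ^ (m + 1) * q := by ring
    rw [e2]
    rw [e] at h1
    simp only [mul_zero, pow_zero, mul_one]
    generalize q ^ (m + 1) = y at *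
    linear_combination (a * y) * h1 - (y * y * q * b - 1) * h0
  | succ N ih =>
    rw [sum_range_succ, sum_range_succ _ (N + 1), mul_add, add_add_add_comm, ih]
    have hP : ∏ i ∈ range (N + 1), (1 - q ^ (m + i + 1))
        = (∏ i ∈ range N, (1 - q ^ (m + i + 2))) * (1 - q ^ (m + 1)) := by
      rw [prod_range_succ']
      rfl
    have hP' : ∏ i ∈ range (N + 1), (1 - q ^ (m + 1 + i + 1))
        = (∏ i ∈ range N, (1 - q ^ (m + i + 2))) * (1 - q ^ (m + 1) * q ^ (N + 1)) := by
      rw [prod_range_succ]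
      congr 1
      · exact prod_congr rfl fun i _ ↦ by ring_nf
      · ring
    have hP'' : ∏ i ∈ range (N + 1), (1 - q ^ (m + i + 2))
        = (∏ i ∈ range N, (1 - q ^ (m + i + 2))) * (1 - q ^ (m + 1) * q ^ (N + 1)) := by
      rw [prod_range_succ]
      ring
    have hW : (∏ i ∈ range (N + 1 + 1), v (m + 1 + i)) * v m
        = (∏ i ∈ range (N + 2), v (m + i)) * v (m + N + 2) := by
      have := (prod_range_succ' (fun i ↦ v (m + i)) (N + 2)).symm.trans
        (prod_range_succ (fun i ↦ v (m + i)) (N + 2))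
      rw [← add_assoc] at this
      rw [← this, add_zero]
      congr 1
      exact prod_congr rfl fun i _ ↦ by congr 1; ring
    rw [gaussTerm, gaussTerm, hP, hP', hP'', prod_range_succ (fun i ↦ v (m + i)) (N + 2),
      ← add_assoc m N 2]
    have h0 := hv m
    have h1 := hv (m + N + 2)
    generalize (∏ i ∈ range (N + 1 + 1), v (m + 1 + i)) = W at *
    generalize (∏ i ∈ range (N + 2), v (m + i)) = V at *
    generalize (∏ i ∈ range N, (1 - q ^ (m + i + 2))) = P at *
    generalize v m = a at *
    generalize v (m + N + 2) = c at *
    have e1 : q ^ (2 * m + 3) = q ^ (m + 1) * q ^ (m + 1) * q := by ring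
    have e2 : q ^ (2 * m + N + 3) = q ^ (m + 1) * q ^ (m + 1) * q ^ (N + 1) := by ring
    have e3 : q ^ (2 * m + (N + 1) + 3) = q ^ (m + 1) * q ^ (m + 1) * q ^ (N + 1) * q := by ring
    have e4 : q ^ ((m + 1 + 1) * (N + 1)) = q ^ ((m + 1) * (N + 1)) * q ^ (N + 1) := by ring
    have e5 : q ^ ((m + 1) * (N + 1 + 1)) = q ^ ((m + 1) * (N + 1)) * q ^ (m + 1) := by ring
    have e6 : q ^ (m + N + 2 + 1) = q ^ (m + 1) * q ^ (N + 1) * q := by ring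
    rw [e1, e2, e3, e4, e5]
    rw [e6] at h1
    have hW' : W = (1 + q ^ (m + 1)) * (V * c) := by
      linear_combination (1 + q ^ (m + 1)) * hW - W * h0
    rw [hW']
    generalize q ^ ((m + 1) * (N + 1)) = Y at *
    generalize q ^ (m + 1) = y at *
    generalize q ^ (N + 1) = z at *
    linear_combination (P * Y * V * y * (1 - y * z)) * h1

theorem one_sub_two_mul_sum_gaussTerm (hv : ∀ i, v i * (1 + q ^ (i + 1)) = 1) (M : ℕ) :
    1 - 2 * q * ∑ n ∈ range M, gaussTerm q v 0 n
      = (∏ i ∈ range M, (1 - q ^ (i + 1))) * ∏ i ∈ range M, v i := by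
  induction M with
  | zero => simp
  | succ M ih =>
    rw [sum_range_succ, mul_add, ← sub_sub, ih, gaussTerm, prod_range_succ, prod_range_succ v,
      ]
    simp only [zero_add, prod_range_succ, one_mul]
    linear_combination (-(∏ i ∈ range M, (1 - q ^ (i + 1))) * ∏ i ∈ range M, v i) * hv M

theorem exists_sum_gaussTerm_eq (hv : ∀ i, v i * (1 + q ^ (i + 1)) = 1) (N M : ℕ) :
    ∃ c, ∑ n ∈ range (N + 1), gaussTerm q v 0 n
      = ∑ j ∈ range M, (-1) ^ j * q ^ (j * (j + 2))
        + (-1) ^ M * q ^ (M * (M + 2)) * ∑ n ∈ range (N + 1), gaussTerm q v M n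
        + q ^ (N + 1) * c := by
  induction M with
  | zero => exact ⟨0, by simp⟩
  | succ M ih =>
    obtain ⟨c, hc⟩ := ih
    have h := sum_gaussTerm_add_sum_gaussTerm_succ hv M N
    have e : q ^ ((M + 1) * (N + 1)) = q ^ (M * (N + 1)) * q ^ (N + 1) := by ring
    rw [e] at h
    refine ⟨c - (-1) ^ M * q ^ (M * (M + 2)) * ((∏ i ∈ range N, (1 - q ^ (M + i + 2)))
      * q ^ (M * (N + 1)) * (1 - q ^ (2 * M + N + 3)) * ∏ i ∈ range (N + 2), v (M + i)), ?_⟩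
    have e2 : q ^ ((M + 1) * (M + 1 + 2)) = q ^ (M * (M + 2)) * q ^ (2 * M + 3) := by ring
    rw [hc, sum_range_succ _ M, e2, pow_succ (-1)]
    linear_combination ((-1) ^ M * q ^ (M * (M + 2))) * h

/-- Truncated form of Gauss's identity `∑ (-1)^j q^(j^2) = ∏ (1 - q^i) / (1 + q^i)`. -/
theorem pow_dvd_prod_one_sub_sub (hv : ∀ i, v i * (1 + q ^ (i + 1)) = 1) (N : ℕ) :
    q ^ N ∣ (∏ i ∈ range N, (1 - q ^ (i + 1)))
      - (1 + 2 * ∑ j ∈ range N, (-1) ^ (j + 1) * q ^ ((j + 1) ^ 2))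
        * ∏ i ∈ range N, (1 + q ^ (i + 1)) := by
  rcases N with _ | N
  · simp
  obtain ⟨c, hc⟩ := exists_sum_gaussTerm_eq hv N (N + 1)
  have h := one_sub_two_mul_sum_gaussTerm hv (N + 1)
  have hV : (∏ i ∈ range (N + 1), v i) * ∏ i ∈ range (N + 1), (1 + q ^ (i + 1)) = 1 := by
    rw [← prod_mul_distrib]
    exact prod_eq_one fun i _ ↦ hv i
  have hs : ∑ j ∈ range (N + 1), (-1) ^ (j + 1) * q ^ ((j + 1) ^ 2)
      = -q * ∑ j ∈ range (N + 1), (-1) ^ j * q ^ (j * (j + 2)) := by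
    rw [mul_sum]
    exact sum_congr rfl fun i _ ↦ by ring
  have e : q ^ ((N + 1) * (N + 1 + 2)) = q ^ (N + 1) * q ^ ((N + 1) * (N + 2)) := by ring
  rw [hc, e] at h
  rw [hs]
  generalize ∑ n ∈ range (N + 1), gaussTerm q v (N + 1) n = H at *
  generalize ∑ j ∈ range (N + 1), (-1) ^ j * q ^ (j * (j + 2)) = T at *
  generalize ∏ i ∈ range (N + 1), (1 - q ^ (i + 1)) = A at *
  generalize ∏ i ∈ range (N + 1), (1 + q ^ (i + 1)) = B at *
  generalize ∏ i ∈ range (N + 1), v i = V at *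
  refine ⟨-2 * q * B * ((-1) ^ (N + 1) * q ^ ((N + 1) * (N + 2)) * H + c), ?_⟩
  linear_combination (-A) * hV - B * h

end

/-- The integer solutions of `a * x ^ 2 + b * y ^ 2 = n`, for positive `a` and `b`. -/
noncomputable def reps (a b n : ℕ) : Finset (ℤ × ℤ) :=
  {z ∈ Icc (-n : ℤ) n ×ˢ Icc (-n : ℤ) n | a * z.1 ^ 2 + b * z.2 ^ 2 = n}

/-- The integer square roots of `n`. -/
noncomputable def sqrts (n : ℕ) : Finset ℤ := {x ∈ Icc (-n : ℤ) n | x ^ 2 = n}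

theorem mem_sqrts {n : ℕ} {x : ℤ} : x ∈ sqrts n ↔ x ^ 2 = n := by
  simp only [sqrts, mem_filter, mem_Icc, and_iff_right_iff_imp]
  intro h
  constructor <;> nlinarith

theorem mem_reps {a b n : ℕ} (ha : 0 < a) (hb : 0 < b) {z : ℤ × ℤ} :
    z ∈ reps a b n ↔ a * z.1 ^ 2 + b * z.2 ^ 2 = n := by
  simp only [reps, mem_filter, mem_product, mem_Icc, and_iff_right_iff_imp]
  intro h
  have ha' : (1 : ℤ) ≤ a := by exact_mod_cast ha
  have hb' : (1 : ℤ) ≤ b := by exact_mod_cast hb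
  have h1 : z.1 ^ 2 ≤ n := by nlinarith [sq_nonneg z.1, sq_nonneg z.2]
  have h2 : z.2 ^ 2 ≤ n := by nlinarith [sq_nonneg z.1, sq_nonneg z.2]
  refine ⟨⟨?_, ?_⟩, ?_, ?_⟩ <;> nlinarith

/-- Ramanujan's theta function `φ(q) = ∑ q ^ (x ^ 2)`, the sum over all integers `x`. -/
noncomputable def theta (F : Type*) [CommRing F] : F⟦X⟧ := mk fun n ↦ (#(sqrts n) : F)

section
variable {F : Type*} [CommRing F]

theorem coeff_expand_theta_mul_expand_theta {a b : ℕ} (ha : a ≠ 0) (hb : b ≠ 0) (n : ℕ) :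
    coeff n (expand a ha (theta F) * expand b hb (theta F)) = #(reps a b n) := by
  have hcard : #(reps a b n) = ∑ ij ∈ antidiagonal n,
      #{z ∈ reps a b n | (a * z.1.natAbs ^ 2, b * z.2.natAbs ^ 2) = ij} := by
    refine card_eq_sum_card_fiberwise fun z hz ↦ ?_
    have := (mem_reps (Nat.pos_of_ne_zero ha) (Nat.pos_of_ne_zero hb)).1 hz
    rw [mem_coe, HasAntidiagonal.mem_antidiagonal]
    zify
    rwa [sq_abs, sq_abs]
  rw [hcard, coeff_mul, Nat.cast_sum]
  refine sum_congr rfl fun ij hij ↦ ?_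
  rw [HasAntidiagonal.mem_antidiagonal] at hij
  obtain ⟨i, j⟩ := ij
  simp only at hij
  simp only [coeff_expand, Prod.mk.injEq]
  by_cases hi : a ∣ i
  · by_cases hj : b ∣ j
    · obtain ⟨i, rfl⟩ := hi
      obtain ⟨j, rfl⟩ := hj
      rw [if_pos (dvd_mul_right _ _), if_pos (dvd_mul_right _ _),
        Nat.mul_div_cancel_left _ (Nat.pos_of_ne_zero ha),
        Nat.mul_div_cancel_left _ (Nat.pos_of_ne_zero hb), theta, coeff_mk, coeff_mk,
        ← Nat.cast_mul, ← card_product]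
      congr 2
      ext z
      simp only [mem_product, mem_sqrts, mem_filter,
        mem_reps (Nat.pos_of_ne_zero ha) (Nat.pos_of_ne_zero hb)]
      rw [Nat.mul_right_inj ha, Nat.mul_right_inj hb]
      zify
      rw [sq_abs, sq_abs]
      refine ⟨fun h ↦ ⟨?_, h⟩, fun h ↦ h.2⟩
      rw [h.1, h.2]
      exact_mod_cast hij
    · rw [if_neg hj, mul_zero, filter_false_of_mem, card_empty, Nat.cast_zero]
      rintro z - ⟨-, rfl⟩
      exact hj (dvd_mul_right _ _)
  · rw [if_neg hi, zero_mul, filter_false_of_mem, card_empty, Nat.cast_zero]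
    rintro z - ⟨rfl, -⟩
    exact hi (dvd_mul_right _ _)

/-- Multiplication of `x + y√-3` by the cube root of unity `(-1 + √-3) / 2`, when `x` and `y` have
the same parity. -/
def cubeRootMul (z : ℤ × ℤ) : ℤ × ℤ := (-(z.1 + 3 * z.2) / 2, (z.1 - z.2) / 2)

theorem three_dvd_card_reps_of_even {n : ℕ} (hn : n ≠ 0) (he : Even n) : 3 ∣ #(reps 1 3 n) := by
  have key : ∀ z ∈ reps 1 3 n, ∃ u v : ℤ, z = (u + v, u - v) := by
    intro z hz
    rw [mem_reps one_pos three_pos] at hz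
    have : Even (z.1 + z.2) := by
      have h : Even ((z.1 : ℤ) ^ 2 + 3 * z.2 ^ 2) := by
        have h2 : Even (n : ℤ) := by exact_mod_cast he
        rw [← hz] at h2
        simpa using h2
      simp only [Int.even_add, Int.even_mul, Int.even_pow] at h ⊢
      simpa [show ¬ Even (3 : ℤ) by decide] using h
    obtain ⟨u, hu⟩ := this
    exact ⟨u, z.1 - u, by ext <;> simp; linarith⟩
  have hval : ∀ u v : ℤ, cubeRootMul (u + v, u - v) = (-2 * u + v, v) := by
    intro u v
    simp only [cubeRootMul, Prod.mk.injEq]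
    constructor <;> omega
  have hmem : ∀ z ∈ reps 1 3 n, cubeRootMul z ∈ reps 1 3 n := by
    intro z hz
    obtain ⟨u, v, rfl⟩ := key z hz
    rw [mem_reps one_pos three_pos] at hz ⊢
    rw [hval]
    push_cast at hz ⊢
    linear_combination hz
  let f : Function.End (reps 1 3 n) := fun z ↦ ⟨cubeRootMul z, hmem z z.2⟩
  have hf : f ^ 3 ^ 1 = 1 := by
    funext z
    obtain ⟨z, hz⟩ := z
    apply Subtype.ext
    change cubeRootMul (cubeRootMul (cubeRootMul z)) = z
    obtain ⟨u, v, rfl⟩ := key z hz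
    simp only [cubeRootMul, Prod.mk.injEq]
    constructor <;> omega
  have := Equiv.Perm.card_fixedPoints_modEq (p := 3) hf
  have h0 : IsEmpty (Function.fixedPoints f) := by
    refine ⟨fun ⟨⟨z, hz⟩, h⟩ ↦ hn ?_⟩
    have h' : cubeRootMul z = z := congrArg Subtype.val h
    obtain ⟨u, v, rfl⟩ := key z hz
    rw [hval, Prod.mk.injEq] at h'
    have hu : u = 0 := by omega
    have hv : v = 0 := by omega
    rw [mem_reps one_pos three_pos, hu, hv] at hz
    simpa using hz.symm
  rw [Fintype.card_coe] at this
  exact Nat.modEq_zero_iff_dvd.1 (this.trans (by rw [Fintype.card_eq_zero_iff.2 h0]))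

theorem card_reps_sq_mul {a b p : ℕ} (ha : 0 < a) (hb : 0 < b) (hp : 0 < p)
    (h : ∀ x y : ℤ, (p : ℤ) ∣ a * x ^ 2 + b * y ^ 2 → (p : ℤ) ∣ x ∧ (p : ℤ) ∣ y) (n : ℕ) :
    #(reps a b (p ^ 2 * n)) = #(reps a b n) := by
  have hp' : (p : ℤ) ≠ 0 := by exact_mod_cast hp.ne'
  symm
  refine card_bij (fun z _ ↦ (p * z.1, p * z.2)) ?_ ?_ ?_
  · intro z hz
    rw [mem_reps ha hb] at hz ⊢
    push_cast
    linear_combination (p : ℤ) ^ 2 * hz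
  · rintro ⟨x, y⟩ _ ⟨x', y'⟩ _ hxy
    simpa [hp.ne'] using hxy
  · rintro ⟨x, y⟩ hz
    rw [mem_reps ha hb] at hz
    obtain ⟨⟨u, rfl⟩, ⟨v, rfl⟩⟩ := h x y ⟨p * n, by rw [hz]; push_cast; ring⟩
    refine ⟨(u, v), ?_, rfl⟩
    rw [mem_reps ha hb]
    have h2 : (p : ℤ) ^ 2 ≠ 0 := pow_ne_zero _ hp'
    apply mul_left_cancel₀ h2
    push_cast at hz
    linear_combination hz

theorem three_dvd_of_dvd_sq_add_sq (x y : ℤ) (h : (3 : ℤ) ∣ x ^ 2 + y ^ 2) : 3 ∣ x ∧ 3 ∣ y := by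
  have hx : x % 3 = 0 ∨ x % 3 = 1 ∨ x % 3 = 2 := by omega
  have hy : y % 3 = 0 ∨ y % 3 = 1 ∨ y % 3 = 2 := by omega
  have h' : (x ^ 2 + y ^ 2) % 3 = 0 := by omega
  rcases hx with hx | hx | hx <;> rcases hy with hy | hy | hy <;>
    (simp [Int.add_emod, pow_two, Int.mul_emod, hx, hy] at h'; try omega)

theorem prime_dvd_of_dvd_sq_add_three_mul_sq {p : ℕ} (hp : p.Prime) (hp5 : p % 6 = 5) (x y : ℤ)
    (h : (p : ℤ) ∣ x ^ 2 + 3 * y ^ 2) : (p : ℤ) ∣ x ∧ (p : ℤ) ∣ y := by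
  have := Fact.mk hp
  have h2 : (2 : ZMod p) ≠ 0 := by
    intro h2
    have := (ZMod.natCast_eq_zero_iff 2 p).1 (by exact_mod_cast h2)
    have := Nat.le_of_dvd two_pos this
    omega
  have h3 : (3 : ZMod p) ≠ 0 := by
    intro h3
    have := (ZMod.natCast_eq_zero_iff 3 p).1 (by exact_mod_cast h3)
    have := Nat.le_of_dvd three_pos this
    omega
  simp only [← ZMod.intCast_zmod_eq_zero_iff_dvd] at *
  push_cast at h
  generalize (x : ZMod p) = a at *
  generalize (y : ZMod p) = b at *
  by_cases hb : b = 0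
  · subst hb
    simpa using h
  · exfalso
    obtain ⟨w, hw⟩ : ∃ w, w = (a / b - 1) / 2 := ⟨_, rfl⟩
    have ha : a = (2 * w + 1) * b := by
      rw [hw]
      field_simp
      ring
    have hw' : w ^ 2 + w + 1 = 0 := by
      have : (4 * b ^ 2) * (w ^ 2 + w + 1) = 0 := by
        rw [← h, ha]
        ring
      refine (mul_eq_zero.1 this).resolve_left ?_
      rw [show (4 : ZMod p) = 2 ^ 2 by norm_num]
      exact mul_ne_zero (pow_ne_zero _ h2) (pow_ne_zero _ hb)
    have hord : orderOf w = 3 := by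
      refine orderOf_eq_prime (by linear_combination (w - 1) * hw') ?_
      rintro rfl
      exact h3 (by linear_combination hw')
    have hw0 : w ≠ 0 := by
      rintro rfl
      simp at hw'
    have := ZMod.orderOf_dvd_card_sub_one hw0
    rw [hord] at this
    omega

end

section
open PowerSeries.WithPiTopology Filter Topology
variable {F : Type*} [Field F]

theorem sqrts_sq (k : ℕ) : sqrts (k ^ 2) = {(k : ℤ), -(k : ℤ)} := by
  ext x
  rw [mem_sqrts, mem_insert, mem_singleton, Nat.cast_pow, sq_eq_sq_iff_eq_or_eq_neg]

theorem X_pow_dvd_rescale_theta_sub (N : ℕ) :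
    (X : F⟦X⟧) ^ N ∣ rescale (-1) (theta F)
      - (1 + 2 * ∑ j ∈ range N, (-1) ^ (j + 1) * X ^ ((j + 1) ^ 2)) := by
  rw [X_pow_dvd_iff]
  intro d hd
  have hC : ∀ j : ℕ, (-1 : F⟦X⟧) ^ j = C ((-1) ^ j) := fun j ↦ by simp
  have h2 : (2 : F⟦X⟧) = C 2 := (map_ofNat C 2).symm
  simp only [hC, h2, map_sub, map_add, coeff_C_mul, map_sum, coeff_X_pow, coeff_one, coeff_rescale,
    theta, coeff_mk]
  by_cases hsq : ∃ k, d = k ^ 2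
  · obtain ⟨k, rfl⟩ := hsq
    rcases k with _ | k
    · rw [sqrts_sq, sum_eq_zero fun j _ ↦ ?_]
      · simp
      · rw [if_neg (by positivity), mul_zero]
    · rw [sum_eq_single k, sqrts_sq, card_pair (by omega)]
      · rw [if_neg (by positivity), if_pos rfl, mul_one, zero_add, pow_two (k + 1), pow_mul]
        rcases neg_one_pow_eq_or F (k + 1) with h | h <;> rw [h] <;> simp [h]
      · intro j _ hj
        rw [if_neg, mul_zero]
        intro h
        have := Nat.pow_left_injective (n := 2) two_ne_zero h
        omega
      · intro hk
        simp only [mem_range, not_lt] at hk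
        nlinarith
  · rw [sum_eq_zero, if_neg]
    · have : sqrts d = ∅ := by
        rw [eq_empty_iff_forall_notMem]
        intro x hx
        rw [mem_sqrts] at hx
        exact hsq ⟨x.natAbs, by zify; rw [sq_abs, hx]⟩
      simp [this]
    · rintro rfl
      exact hsq ⟨0, rfl⟩
    · intro j _
      rw [if_neg, mul_zero]
      rintro rfl
      exact hsq ⟨_, rfl⟩

variable [TopologicalSpace F]

/-- The infinite product `∏ (1 + c n * X ^ n)` over `n ≥ 1`. -/
noncomputable def eulerProd (c : ℕ → F) : F⟦X⟧ := ∏' i : ℕ, (1 + C (c (i + 1)) * X ^ (i + 1))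

theorem multipliable_one_add_C_mul_X_pow (c : ℕ → F) :
    Multipliable fun i : ℕ ↦ (1 + C (c (i + 1)) * X ^ (i + 1) : F⟦X⟧) := by
  apply multipliable_one_add_of_tendsto_order_atTop_nhds_top
  refine ENat.tendsto_nhds_top_iff_natCast_lt.mpr fun n ↦ eventually_atTop.mpr ⟨n, fun m hm ↦ ?_⟩
  refine lt_of_lt_of_le (b := ((m + 1 : ℕ) : ℕ∞)) (by exact_mod_cast Nat.lt_succ_of_le hm) ?_
  refine nat_le_order _ _ fun i hi ↦ ?_
  rw [coeff_C_mul, coeff_X_pow, if_neg hi.ne, mul_zero]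

variable [T2Space F]

theorem eulerProd_ne_zero (c : ℕ → F) : eulerProd c ≠ 0 := by
  intro h
  have := (multipliable_one_add_C_mul_X_pow c).map_tprod (constantCoeff (R := F))
    (continuous_constantCoeff F)
  rw [← eulerProd, h] at this
  simp at this

variable [IsTopologicalRing F]

theorem eulerProd_mul_eulerProd {c d : ℕ → F} (h : ∀ n, c n * d n = 0) :
    eulerProd c * eulerProd d = eulerProd (c + d) := by
  rw [eulerProd, eulerProd, ← (multipliable_one_add_C_mul_X_pow c).tprod_mul
    (multipliable_one_add_C_mul_X_pow d)]
  refine tprod_congr fun i ↦ ?_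
  have := congrArg (C (R := F)) (h (i + 1))
  simp only [map_mul, map_zero] at this
  simp only [Pi.add_apply, map_add]
  linear_combination X ^ (i + 1) * X ^ (i + 1) * this

theorem rescale_eulerProd (a : F) (c : ℕ → F) :
    rescale a (eulerProd c) = eulerProd fun n ↦ a ^ n * c n := by
  have hcont : Continuous (rescale a : F⟦X⟧ → F⟦X⟧) := by
    rw [continuous_iff_continuousAt]
    intro f
    rw [ContinuousAt, tendsto_iff_coeff_tendsto]
    intro d
    simp only [coeff_rescale]
    exact (continuous_const.mul (continuous_coeff F d)).tendsto f
  rw [eulerProd, (multipliable_one_add_C_mul_X_pow c).map_tprod _ hcont]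
  refine tprod_congr fun i ↦ ?_
  ext n
  simp only [coeff_rescale, map_add, coeff_C_mul, coeff_one, coeff_X_pow]
  split_ifs <;> simp_all

/-- Gauss's identity `φ(-q) = ∏ (1 - q ^ n) / (1 + q ^ n)`. -/
theorem rescale_theta_mul_eulerProd :
    rescale (-1) (theta F) * eulerProd (fun _ ↦ 1) = eulerProd fun _ ↦ -1 := by
  have hP (c : ℕ → F) := (multipliable_one_add_C_mul_X_pow c).hasProd.tendsto_prod_nat
  have h := ((hP fun _ ↦ 1).const_mul (rescale (-1) (theta F))).sub (hP fun _ ↦ -1)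
  rw [← sub_eq_zero]
  refine tendsto_nhds_unique h ?_
  rw [tendsto_iff_coeff_tendsto]
  intro d
  refine tendsto_const_nhds.congr' (eventually_atTop.2 ⟨d + 1, fun N hN ↦ ?_⟩)
  have hv (i : ℕ) : (1 + X ^ (i + 1) : F⟦X⟧)⁻¹ * (1 + X ^ (i + 1)) = 1 :=
    PowerSeries.inv_mul_cancel _ (by simp)
  have hdvd := (X_pow_dvd_rescale_theta_sub (F := F) N).mul_right
    (∏ i ∈ range N, (1 + X ^ (i + 1)))
  have hdvd' := hdvd.sub (pow_dvd_prod_one_sub_sub hv N)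
  have := X_pow_dvd_iff.1 hdvd' d (by omega)
  rw [map_zero, ← this]
  congr 1
  simp only [map_one, map_neg, one_mul, neg_mul, ← sub_eq_add_neg]
  ring

theorem rescale_theta_mul_sq :
    rescale (-1) (theta F) * eulerProd (fun n ↦ if Odd n then 1 else 0) ^ 2
      = theta F * eulerProd (fun n ↦ if Odd n then -1 else 0) ^ 2 := by
  have h1 := rescale_theta_mul_eulerProd (F := F)
  have h2 := congrArg (rescale (-1)) h1
  rw [map_mul, rescale_rescale, rescale_eulerProd, rescale_eulerProd, neg_one_mul, neg_neg,
    rescale_one, RingHom.id_apply] at h2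
  have hsplit (a b : F) (c : ℕ → F) (hc : ∀ n, c n = if Odd n then a else b) :
      eulerProd c = eulerProd (fun n ↦ if Odd n then a else 0)
        * eulerProd (fun n ↦ if Odd n then 0 else b) := by
    rw [eulerProd_mul_eulerProd]
    · congr 1
      ext n
      by_cases hn : Odd n <;> simp [hc, hn]
    · intro n
      by_cases hn : Odd n <;> simp [hn]
  have hpow (n : ℕ) : (-1 : F) ^ n = if Odd n then -1 else 1 := by
    split_ifs with hn
    · exact hn.neg_one_pow
    · exact (Nat.not_odd_iff_even.1 hn).neg_one_pow
  rw [hsplit 1 1 (fun _ ↦ 1) (by simp), hsplit (-1) (-1) (fun _ ↦ -1) (by simp)] at h1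
  rw [hsplit (-1) 1 (fun n ↦ (-1) ^ n * 1) (by simp [hpow]),
    hsplit 1 (-1) (fun n ↦ (-1) ^ n * -1) (fun n ↦ by rw [hpow]; split_ifs <;> simp)] at h2
  have hA := eulerProd_ne_zero fun n ↦ if Odd n then (0 : F) else 1
  have hE := eulerProd_ne_zero fun n ↦ if Odd n then (0 : F) else -1
  apply mul_right_cancel₀ (mul_ne_zero hA hE)
  linear_combination (eulerProd (fun n ↦ if Odd n then 1 else 0)
      * eulerProd (fun n ↦ if Odd n then 0 else -1)) * h1
    - (eulerProd (fun n ↦ if Odd n then -1 else 0)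
      * eulerProd (fun n ↦ if Odd n then 0 else -1)) * h2

theorem mk_biregOverpartitions_mul_eulerProd (a b : ℕ) :
    (mk fun n ↦ (biregOverpartitions a b n : F))
        * eulerProd (fun n ↦ if ¬ a ∣ n ∧ ¬ b ∣ n then -1 else 0)
      = eulerProd (fun n ↦ if ¬ a ∣ n ∧ ¬ b ∣ n then 1 else 0) := by
  have hgen : (mk fun n ↦ (biregOverpartitions a b n : F))
      = Nat.Partition.genFun fun i _ ↦ if ¬ a ∣ i ∧ ¬ b ∣ i then (2 : F) else 0 := by
    ext n
    rw [coeff_mk, Nat.Partition.coeff_genFun, biregOverpartitions, Nat.cast_sum]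
    refine sum_congr rfl fun p _ ↦ ?_
    rw [Finsupp.prod, Multiset.toFinsupp_support]
    split_ifs with h
    · rw [prod_congr rfl fun i hi ↦ if_pos (h i (Multiset.mem_toFinset.1 hi)), prod_const]
      simp
    · push Not at h
      obtain ⟨x, hx, hx'⟩ := h
      rw [prod_eq_zero (Multiset.mem_toFinset.2 hx), Nat.cast_zero]
      rw [if_neg]
      exact fun h ↦ h.2 (hx' h.1)
  rw [hgen, Nat.Partition.genFun_eq_tprod, eulerProd, eulerProd,
    ← (Nat.Partition.multipliable_genFun fun i _ ↦ if ¬ a ∣ i ∧ ¬ b ∣ i then (2 : F) else 0).tprod_mul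
      (multipliable_one_add_C_mul_X_pow fun n ↦ if ¬ a ∣ n ∧ ¬ b ∣ n then (-1 : F) else 0)]
  refine tprod_congr fun i ↦ ?_
  split_ifs with h
  · have hg : (∑' j : ℕ, (X ^ (i + 1) : F⟦X⟧) ^ j) * (1 - X ^ (i + 1)) = 1 :=
      tsum_pow_mul_one_sub_of_constantCoeff_eq_zero (by simp)
    have hs : ∑' j : ℕ, (2 : F) • (X : F⟦X⟧) ^ ((i + 1) * (j + 1))
        = 2 * X ^ (i + 1) * ∑' j : ℕ, (X ^ (i + 1) : F⟦X⟧) ^ j := by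
      have hsum : Summable fun j : ℕ ↦ (X ^ (i + 1) : F⟦X⟧) ^ j :=
        summable_pow_of_constantCoeff_eq_zero (by simp)
      rw [← hsum.tsum_mul_left]
      refine tsum_congr fun j ↦ ?_
      rw [smul_eq_C_mul, map_ofNat]
      ring
    rw [hs]
    simp only [map_neg, map_one]
    linear_combination (2 * X ^ (i + 1)) * hg
  · simp

theorem eulerProd_pow_char_pow {p : ℕ} [Fact p.Prime] [CharP F p] (k : ℕ) {c : ℕ → F}
    (hc : ∀ n, c n ^ p ^ k = c n) :
    eulerProd c ^ p ^ k = eulerProd fun n ↦ if p ^ k ∣ n then c (n / p ^ k) else 0 := by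
  have hpk : 0 < p ^ k := pow_pos (Fact.out : p.Prime).pos k
  have : CharP F⟦X⟧ p := charP_of_injective_algebraMap (algebraMap F F⟦X⟧).injective p
  rw [eulerProd, ← (multipliable_one_add_C_mul_X_pow c).tprod_pow, eulerProd, eq_comm]
  simp only [add_pow_char_pow, one_pow, mul_pow, ← map_pow, hc, ← pow_mul]
  refine tprod_eq_tprod_of_ne_one_bij (fun i ↦ (i.val + 1) * p ^ k - 1) ?_ ?_ ?_
  · intro a b h
    have h' := Nat.sub_one_cancel (by positivity) (by positivity) h
    rw [mul_left_inj' hpk.ne', add_left_inj] at h'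
    exact SetCoe.ext h'
  · intro i hi
    rw [Function.mem_mulSupport] at hi
    have hd : p ^ k ∣ i + 1 := by
      by_contra hd
      simp [hd] at hi
    obtain ⟨j, hj⟩ := hd
    obtain ⟨j, rfl⟩ : ∃ l, j = l + 1 := Nat.exists_eq_add_one_of_ne_zero (by rintro rfl; simp at hj)
    refine ⟨⟨j, ?_⟩, ?_⟩
    · rw [hj, if_pos (dvd_mul_right _ _), Nat.mul_div_cancel_left _ hpk, mul_comm (p ^ k)] at hi
      exact hi
    · simp only
      rw [mul_comm, ← hj, Nat.add_sub_cancel]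
  · intro i
    have : (i.val + 1) * p ^ k - 1 + 1 = (i.val + 1) * p ^ k := Nat.sub_add_cancel (Nat.mul_pos i.val.succ_pos hpk)
    rw [this, if_pos (dvd_mul_left _ _), Nat.mul_div_cancel _ hpk]

theorem mk_biregOverpartitions_mul_theta_pow [CharP F 3] :
    (mk fun n ↦ (biregOverpartitions 2 9 n : F)) * theta F ^ 4 = rescale (-1) (theta F) ^ 4 := by
  have : Fact (Nat.Prime 3) := ⟨Nat.prime_three⟩
  have hsplit (a : F) (ha : a ^ 3 ^ 2 = a) :
      eulerProd (fun n ↦ if Odd n then a else 0)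
        = eulerProd (fun n ↦ if ¬ 2 ∣ n ∧ ¬ 9 ∣ n then a else 0)
          * eulerProd (fun n ↦ if Odd n then a else 0) ^ 3 ^ 2 := by
    rw [eulerProd_pow_char_pow 2 (fun n ↦ by split_ifs <;> [exact ha; simp]), eulerProd_mul_eulerProd]
    · congr 1
      ext n
      by_cases h9 : 9 ∣ n
      · have : Odd (n / 9) ↔ Odd n := by
          obtain ⟨m, rfl⟩ := h9
          rw [Nat.mul_div_cancel_left _ (by norm_num), Nat.odd_mul]
          simp [show Odd 9 by decide]
        simp [h9, this]
      · simp [h9, ← even_iff_two_dvd]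
    · intro n
      by_cases h9 : 9 ∣ n <;> simp [h9]
  have hA := hsplit 1 (by simp)
  have hE := hsplit (-1) (by norm_num)
  have hG := mk_biregOverpartitions_mul_eulerProd (F := F) 2 9
  have hθ := rescale_theta_mul_sq (F := F)
  have hA0 := eulerProd_ne_zero fun n ↦ if Odd n then (1 : F) else 0
  have hE0 := eulerProd_ne_zero fun n ↦ if Odd n then (-1 : F) else 0
  generalize eulerProd (fun n ↦ if Odd n then (1 : F) else 0) = A at *
  generalize eulerProd (fun n ↦ if Odd n then (-1 : F) else 0) = E at *
  generalize eulerProd (fun n ↦ if ¬ 2 ∣ n ∧ ¬ 9 ∣ n then (1 : F) else 0) = A' at *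
  generalize eulerProd (fun n ↦ if ¬ 2 ∣ n ∧ ¬ 9 ∣ n then (-1 : F) else 0) = E' at *
  generalize (mk fun n ↦ (biregOverpartitions 2 9 n : F)) = G at *
  have h8 : G * A ^ 8 = E ^ 8 := by
    apply mul_right_cancel₀ (mul_ne_zero hA0 hE0)
    linear_combination (A ^ 9 * E ^ 9) * hG + (G * A ^ 9) * hE - E ^ 9 * hA
  apply mul_right_cancel₀ (pow_ne_zero 8 hA0)
  have h4 := congrArg (· ^ 4) hθ
  simp only [mul_pow, ← pow_mul] at h4
  linear_combination theta F ^ 4 * h8 - h4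

theorem expand_eq_pow (p : ℕ) [Fact p.Prime] [CharP F p] (hF : ∀ a : F, a ^ p = a) (f : F⟦X⟧) :
    expand p (Fact.out : p.Prime).ne_zero f = f ^ p := by
  have hp : p ≠ 0 := (Fact.out : p.Prime).ne_zero
  have hcont : Continuous (expand p hp : F⟦X⟧ → F⟦X⟧) := by
    rw [continuous_iff_continuousAt]
    intro f
    rw [ContinuousAt, tendsto_iff_coeff_tendsto]
    intro d
    simp only [coeff_expand]
    split_ifs
    · exact (continuous_coeff F _).tendsto f
    · exact tendsto_const_nhds
  have : CharP F⟦X⟧ p := charP_of_injective_algebraMap (algebraMap F F⟦X⟧).injective p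
  have h1 := (hasSum_of_monomials_self f).map (expand p hp) hcont
  have h2 := (hasSum_of_monomials_self f).map (frobenius F⟦X⟧ p) (continuous_pow p)
  refine h1.unique ?_
  convert! h2 using 1
  ext1 d
  simp only [Function.comp_apply, expand_monomial, frobenius_def]
  rw [monomial_pow, hF]

end

theorem theta_pow_three : theta (ZMod 3) ^ 3 = expand 3 three_ne_zero (theta (ZMod 3)) :=
  (expand_eq_pow 3 (fun a ↦ ZMod.pow_card a) _).symm

theorem coeff_theta_pow_four (n : ℕ) : coeff n (theta (ZMod 3) ^ 4) = (#(reps 1 3 n) : ZMod 3) := by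
  rw [← coeff_expand_theta_mul_expand_theta one_ne_zero three_ne_zero, expand_one_apply,
    ← theta_pow_three, ← pow_succ']

theorem theta_pow_four_add_rescale :
    theta (ZMod 3) ^ 4 + rescale (-1) (theta (ZMod 3)) ^ 4 = C 2 := by
  ext n
  rw [← map_pow, map_add, coeff_rescale, coeff_theta_pow_four, coeff_C]
  rcases eq_or_ne n 0 with rfl | hn
  · have : reps 1 3 0 = {(0, 0)} := by
      simp [reps]
    rw [this]
    decide
  · rw [if_neg hn]
    rcases Nat.even_or_odd n with he | ho
    · rw [(ZMod.natCast_eq_zero_iff _ _).2 (three_dvd_card_reps_of_even hn he)]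
      simp
    · rw [ho.neg_one_pow]
      ring

theorem coeff_three_mul_theta_sq (n : ℕ) :
    coeff (3 * n) (theta (ZMod 3) ^ 2) = coeff n (theta (ZMod 3) ^ 6) := by
  have hco (m : ℕ) : coeff m (theta (ZMod 3) ^ 2) = (#(reps 1 1 m) : ZMod 3) := by
    rw [← coeff_expand_theta_mul_expand_theta one_ne_zero one_ne_zero, expand_one_apply, pow_two]
  have hdvd (x y : ℤ) (h : ((3 : ℕ) : ℤ) ∣ (1 : ℕ) * x ^ 2 + (1 : ℕ) * y ^ 2) :
      ((3 : ℕ) : ℤ) ∣ x ∧ ((3 : ℕ) : ℤ) ∣ y :=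
    three_dvd_of_dvd_sq_add_sq x y (by simpa using h)
  rw [show 6 = 3 * 2 from rfl, pow_mul, theta_pow_three, ← map_pow, coeff_expand, hco]
  split_ifs with h
  · obtain ⟨m, rfl⟩ := h
    rw [Nat.mul_div_cancel_left _ three_pos, hco, ← mul_assoc, ← pow_two,
      card_reps_sq_mul one_pos one_pos three_pos hdvd]
  · rw [card_eq_zero.2, Nat.cast_zero]
    rw [eq_empty_iff_forall_notMem]
    rintro ⟨x, y⟩ hz
    rw [mem_reps one_pos one_pos] at hz
    obtain ⟨⟨u, rfl⟩, ⟨v, rfl⟩⟩ := hdvd x y ⟨n, by rw [hz]; push_cast; ring⟩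
    push_cast at hz
    exact h (by zify; exact ⟨u ^ 2 + v ^ 2, by linarith⟩)

theorem coeff_mul_expand {R : Type*} [CommRing R] {p : ℕ} (hp : p ≠ 0) (f g : R⟦X⟧) (n : ℕ) :
    coeff (p * n) (f * expand p hp g) = coeff n ((mk fun m ↦ coeff (p * m) f) * g) := by
  rw [coeff_mul, coeff_mul]
  symm
  refine sum_of_injOn (fun ij ↦ (p * ij.1, p * ij.2)) ?_ ?_ ?_ ?_
  · rintro ⟨i, j⟩ - ⟨i', j'⟩ - h
    simpa [hp] using h
  · rintro ⟨i, j⟩ h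
    simp only [mem_coe, HasAntidiagonal.mem_antidiagonal] at h ⊢
    rw [← h, mul_add]
  · rintro ⟨i, j⟩ h h'
    rw [HasAntidiagonal.mem_antidiagonal] at h
    simp only at h
    rw [coeff_expand_of_not_dvd, mul_zero]
    rintro ⟨j, rfl⟩
    have hi : p ∣ i := (Nat.dvd_add_left (dvd_mul_right p j)).1 (h ▸ dvd_mul_right p n)
    obtain ⟨i, rfl⟩ := hi
    refine h' ⟨(i, j), ?_, rfl⟩
    rw [mem_coe, HasAntidiagonal.mem_antidiagonal]
    rw [← mul_add] at h
    exact mul_left_cancel₀ hp h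
  · rintro ⟨i, j⟩ -
    rw [coeff_mk, coeff_expand_mul]

/-- Modulo 3, the values at multiples of 3 count representations by `x ^ 2 + 3 * y ^ 2`. -/
theorem biregOverpartitions_three_mul {n : ℕ} (hn : n ≠ 0) :
    (biregOverpartitions 2 9 (3 * n) : ZMod 3) = -#(reps 1 3 n) := by
  have hG := mk_biregOverpartitions_mul_theta_pow (F := ZMod 3)
  have hθ := theta_pow_four_add_rescale
  have hθ0 : theta (ZMod 3) ≠ 0 := by
    intro h
    rw [h] at hθ
    have := congrArg (coeff 0) hθ
    simp at this
    revert this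
    decide
  set G := mk fun n ↦ (biregOverpartitions 2 9 n : ZMod 3) with hGdef
  have h2 : (C 2 : (ZMod 3)⟦X⟧) = -1 := by
    rw [show (2 : ZMod 3) = -1 by decide, map_neg, map_one]
  have hH : (G + 1) * expand 3 three_ne_zero (theta (ZMod 3) ^ 2) = -theta (ZMod 3) ^ 2 := by
    rw [map_pow, ← theta_pow_three]
    linear_combination theta (ZMod 3) ^ 2 * (hG + hθ + h2)
  have hU : (mk fun m ↦ coeff (3 * m) (G + 1)) = -theta (ZMod 3) ^ 4 := by
    apply mul_right_cancel₀ (pow_ne_zero 2 hθ0)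
    ext m
    rw [← coeff_mul_expand three_ne_zero, hH, map_neg, coeff_three_mul_theta_sq, neg_mul, map_neg,
      ← pow_add]
  have := congrArg (coeff n) hU
  rw [coeff_mk, map_neg, coeff_theta_pow_four, map_add, hGdef, coeff_mk, coeff_one,
    if_neg (by omega), add_zero] at this
  exact this

theorem B29_mult_mod3 (k : ℕ) (hk : 0 < k) (p : ℕ) (hp : p.Prime) (hp5 : p % 6 = 5)
    (r : ℕ) (hr : p ∣ 6 * r + 5) (n : ℕ) :
    (biregOverpartitions 2 9 (18 * p ^ (k + 1) * n + 18 * p * r + 15 * p) : ℤ) ≡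
      -(p : ℤ) * biregOverpartitions 2 9 (18 * p ^ (k - 1) * n + (18 * r + 15) / p) [ZMOD 3] := by
  obtain ⟨s, hs⟩ := hr
  obtain ⟨k, rfl⟩ : ∃ l, k = l + 1 := Nat.exists_eq_add_one_of_ne_zero hk.ne'
  have hdiv : (18 * r + 15) / p = 3 * s := by
    rw [show 18 * r + 15 = p * (3 * s) by linarith, Nat.mul_div_cancel_left _ hp.pos]
  have hs0 : s ≠ 0 := by
    rintro rfl
    omega
  rw [hdiv, Nat.add_sub_cancel,
    show 18 * p ^ k * n + 3 * s = 3 * (6 * p ^ k * n + s) by ring,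
    show 18 * p ^ (k + 1 + 1) * n + 18 * p * r + 15 * p = 3 * (p ^ 2 * (6 * p ^ k * n + s)) by
      linear_combination (3 * p) * hs]
  have hp1 : (p : ZMod 3) = -1 := by
    have : ((p : ℕ) : ZMod 3) = ((2 : ℕ) : ZMod 3) :=
      (ZMod.natCast_eq_natCast_iff _ _ _).2 (by unfold Nat.ModEq; omega)
    rw [this]
    decide
  refine (ZMod.intCast_eq_intCast_iff _ _ 3).1 ?_
  have hm : 6 * p ^ k * n + s ≠ 0 := by omega
  push_cast
  rw [biregOverpartitions_three_mul hm,
    biregOverpartitions_three_mul (mul_ne_zero (pow_ne_zero 2 hp.ne_zero) hm),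
    card_reps_sq_mul one_pos three_pos hp.pos fun x y h ↦
      prime_dvd_of_dvd_sq_add_three_mul_sq hp hp5 x y (by simpa using h), hp1]
  ring
end

section
/- Let k ≥ 0 and n ≥ 0 be integers, and let p₁, p₂, …, p_{k+1} be odd primes with pᵢ ≢ 1 (mod 4) for each 1 ≤ i ≤ k+1. Then for every positive integer j with j ≢ 0 (mod p_{k+1}), we have B̄_{5,2}( 4·p₁²p₂²⋯p_k²p_{k+1}²·n + (4j + p_{k+1})·p₁²p₂²⋯p_k²·p_{k+1} ) ≡ 0 (mod 4). -/
/-- The partitions of `n` with a single part size, all of whose parts satisfy `P`, are counted by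
the divisors of `n` that satisfy `P`. -/
lemma card_partitions_one_part_size {n : ℕ} (hn : n ≠ 0) (P : ℕ → Prop) [DecidablePred P] :
    (Finset.univ.filter fun p : n.Partition =>
      (∀ x ∈ p.parts, P x) ∧ p.parts.toFinset.card = 1).card =
      (n.divisors.filter P).card := by
  symm
  refine Finset.card_bij (fun d hd =>
    { parts := Multiset.replicate (n / d) d
      parts_pos := fun {i} hi => by
        rw [Multiset.eq_of_mem_replicate hi]
        exact Nat.pos_of_mem_divisors (Finset.mem_filter.mp hd).1
      parts_sum := by
        rw [Multiset.sum_replicate, smul_eq_mul]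
        exact Nat.div_mul_cancel (Nat.dvd_of_mem_divisors (Finset.mem_filter.mp hd).1) }) ?_ ?_ ?_
  · intro d hd
    obtain ⟨hdn, hPd⟩ := Finset.mem_filter.mp hd
    have hq : n / d ≠ 0 := (Nat.div_pos (Nat.divisor_le hdn) (Nat.pos_of_mem_divisors hdn)).ne'
    refine Finset.mem_filter.mpr ⟨Finset.mem_univ _, fun x hx => ?_, ?_⟩
    · rwa [Multiset.eq_of_mem_replicate hx]
    · rw [Multiset.toFinset_replicate, if_neg hq, Finset.card_singleton]
  · intro d hd e he h
    have hdn := (Finset.mem_filter.mp hd).1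
    have hq : n / d ≠ 0 := (Nat.div_pos (Nat.divisor_le hdn) (Nat.pos_of_mem_divisors hdn)).ne'
    have hparts : Multiset.replicate (n / d) d = Multiset.replicate (n / e) e :=
      congrArg Nat.Partition.parts h
    exact Multiset.eq_of_mem_replicate (hparts ▸ Multiset.mem_replicate.mpr ⟨hq, rfl⟩)
  · intro p hp
    obtain ⟨-, hP, hcard⟩ := Finset.mem_filter.mp hp
    obtain ⟨d, hd⟩ := Finset.card_eq_one.mp hcard
    have hmem : ∀ x, x ∈ p.parts ↔ x = d := fun x => by
      rw [← Multiset.mem_toFinset, hd, Finset.mem_singleton]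
    have hrep : p.parts = Multiset.replicate p.parts.card d :=
      Multiset.eq_replicate_card.mpr fun x hx => (hmem x).mp hx
    have hdp : d ∈ p.parts := (hmem d).mpr rfl
    have hsum : p.parts.card * d = n := by
      rw [← smul_eq_mul, ← Multiset.sum_replicate, ← hrep, p.parts_sum]
    have hdiv : n / d = p.parts.card :=
      Nat.div_eq_of_eq_mul_left (p.parts_pos hdp) hsum.symm
    refine ⟨d, Finset.mem_filter.mpr ⟨Nat.mem_divisors.mpr ⟨?_, hn⟩, hP d hdp⟩, ?_⟩
    · exact Dvd.intro_left _ hsum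
    · exact Nat.Partition.ext ((congrArg (Multiset.replicate · d) hdiv).trans hrep.symm)

/-- Modulo `4`, only the partitions with a single part size contribute to the number of
biregular overpartitions. -/
lemma biregOverpartitions_modEq_four (l1 l2 : ℕ) {n : ℕ} (hn : n ≠ 0) :
    biregOverpartitions l1 l2 n ≡
      2 * (n.divisors.filter fun d => ¬ l1 ∣ d ∧ ¬ l2 ∣ d).card [MOD 4] := by
  rw [← card_partitions_one_part_size hn, Finset.card_filter, Finset.mul_sum, biregOverpartitions]
  refine Nat.ModEq.sum fun p _ => ?_
  by_cases hP : ∀ x ∈ p.parts, ¬ l1 ∣ x ∧ ¬ l2 ∣ x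
  · have hpos : p.parts.toFinset.card ≠ 0 := by
      rw [Finset.card_ne_zero, Multiset.toFinset_nonempty]
      intro h
      exact hn (by rw [← p.parts_sum, h, Multiset.sum_zero])
    by_cases hcard : p.parts.toFinset.card = 1
    · rw [if_pos hP, if_pos ⟨hP, hcard⟩, hcard, pow_one, mul_one]
    · rw [if_pos hP, if_neg fun h => hcard h.2]
      exact (Nat.modEq_zero_iff_dvd).mpr (pow_dvd_pow 2 (by omega : 2 ≤ p.parts.toFinset.card))
  · rw [if_neg hP, if_neg fun h => hP h.1, mul_zero]

/-- The divisors of `n` prime to the primes `q` and `r` are the divisors of the part of `n` prime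
to `q` and `r`. -/
lemma divisors_filter_not_dvd {q r n : ℕ} (hq : q.Prime) (hr : r.Prime) (hn : n ≠ 0) :
    (n.divisors.filter fun d => ¬ q ∣ d ∧ ¬ r ∣ d) = (ordCompl[q] (ordCompl[r] n)).divisors := by
  have hm : ordCompl[r] n ≠ 0 := (Nat.ordCompl_pos r hn).ne'
  ext d
  rw [Finset.mem_filter, Nat.mem_divisors, Nat.mem_divisors]
  constructor
  · rintro ⟨⟨hd, -⟩, hqd, hrd⟩
    exact ⟨Nat.dvd_ordCompl_of_dvd_not_dvd (Nat.dvd_ordCompl_of_dvd_not_dvd hd hrd) hqd,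
      (Nat.ordCompl_pos q hm).ne'⟩
  · rintro ⟨hd, -⟩
    have hd' := hd.trans (Nat.ordCompl_dvd _ q)
    exact ⟨⟨hd'.trans (Nat.ordCompl_dvd n r), hn⟩,
      fun h => Nat.not_dvd_ordCompl hq hm (h.trans hd),
      fun h => Nat.not_dvd_ordCompl hr hn (h.trans hd')⟩

lemma even_card_divisors_of_odd_factorization {p n : ℕ} (h : Odd (n.factorization p)) :
    Even n.divisors.card := by
  have hn : n ≠ 0 := by
    rintro rfl
    simp at h
  have hp : p ∈ n.primeFactors := by
    rw [← Nat.support_factorization, Finsupp.mem_support_iff]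
    exact h.pos.ne'
  rw [Nat.card_divisors hn, even_iff_two_dvd]
  exact h.add_one.two_dvd.trans (Finset.dvd_prod_of_mem (fun x => n.factorization x + 1) hp)

lemma four_dvd_biregOverpartitions {q r p n : ℕ} (hq : q.Prime) (hr : r.Prime) (hpq : p ≠ q)
    (hpr : p ≠ r) (h : Odd (n.factorization p)) : 4 ∣ biregOverpartitions q r n := by
  have hn : n ≠ 0 := by
    rintro rfl
    simp at h
  rw [(biregOverpartitions_modEq_four q r hn).dvd_iff dvd_rfl, divisors_filter_not_dvd hq hr hn]
  refine mul_dvd_mul_left 2 (even_card_divisors_of_odd_factorization (p := p) ?_).two_dvd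
  rwa [Nat.factorization_ordCompl, Finsupp.erase_ne hpq, Nat.factorization_ordCompl,
    Finsupp.erase_ne hpr]

theorem B52_inf_family_mod4 (k n : ℕ) (p : Fin (k + 2) → ℕ)
    (hp : ∀ i, (p i).Prime ∧ Odd (p i) ∧ p i % 4 ≠ 1)
    (j : ℕ) (hj : 0 < j) (hjp : ¬ p (Fin.last (k + 1)) ∣ j) :
    4 ∣ biregOverpartitions 5 2
      (4 * (∏ i, p i ^ 2) * n +
        (4 * j + p (Fin.last (k + 1))) * (∏ i : Fin (k + 1), p i.castSucc ^ 2) *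
          p (Fin.last (k + 1))) := by
  obtain ⟨hprime, hodd, hmod⟩ := hp (Fin.last (k + 1))
  have hR : ∏ i : Fin (k + 1), p i.castSucc ≠ 0 :=
    Finset.prod_ne_zero_iff.mpr fun i _ => (hp i.castSucc).1.ne_zero
  rw [Fin.prod_univ_castSucc, Finset.prod_pow]
  generalize ∏ i : Fin (k + 1), p i.castSucc = R at hR ⊢
  generalize p (Fin.last (k + 1)) = s at hprime hodd hmod hjp ⊢
  have hs2 : s ≠ 2 := by
    rintro rfl
    exact absurd hodd (by decide)
  have hu : ¬ s ∣ 4 * j + s * (4 * n + 1) := by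
    rw [Nat.dvd_add_left (dvd_mul_right _ _), hprime.dvd_mul, not_or]
    refine ⟨fun h => hs2 ?_, hjp⟩
    exact (Nat.prime_dvd_prime_iff_eq hprime Nat.prime_two).mp
      (hprime.dvd_of_dvd_pow (n := 2) h)
  have hu0 : 4 * j + s * (4 * n + 1) ≠ 0 := fun h => hu (h ▸ dvd_zero s)
  refine four_dvd_biregOverpartitions (p := s) Nat.prime_five Nat.prime_two
    (by rintro rfl; exact hmod rfl) hs2 ?_
  rw [show 4 * (R ^ 2 * s ^ 2) * n + (4 * j + s) * R ^ 2 * s =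
      R ^ 2 * s * (4 * j + s * (4 * n + 1)) by ring,
    Nat.factorization_mul (mul_ne_zero (pow_ne_zero 2 hR) hprime.ne_zero) hu0,
    Nat.factorization_mul (pow_ne_zero 2 hR) hprime.ne_zero, Nat.factorization_pow,
    Finsupp.add_apply, Finsupp.add_apply, Finsupp.smul_apply, hprime.factorization_self,
    Nat.factorization_eq_zero_of_not_dvd hu]
  exact ⟨R.factorization s, rfl⟩
end

section
/- For all integers n ≥ 0, the number of (5,4)-biregular overpartitions of 4n+3 satisfies B̄_{5,4}(4n+3) ≡ 0 (mod 4). -/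
/-- The divisors of a natural number congruent to `3` modulo `4` are even in number. -/
theorem even_card_divisors_of_mod_four_eq_three {m : ℕ} (hm : m % 4 = 3) :
    Even m.divisors.card := by
  have hm0 : m ≠ 0 := by omega
  have hz : ∑ _d ∈ m.divisors, (1 : ZMod 2) = 0 := by
    refine Finset.sum_involution (fun d _ => m / d) (fun _ _ => by decide) ?_ ?_ ?_
    · intro d hd _ h
      have hmul := Nat.div_mul_cancel (Nat.dvd_of_mem_divisors hd)
      rw [h] at hmul
      have h4 : (d % 4) * (d % 4) % 4 = 3 := by rw [← Nat.mul_mod, hmul, hm]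
      have : d % 4 < 4 := Nat.mod_lt _ (by norm_num)
      interval_cases d % 4 <;> omega
    · intro d hd
      exact Nat.mem_divisors.2 ⟨Nat.div_dvd_of_dvd (Nat.dvd_of_mem_divisors hd), hm0⟩
    · intro d hd
      exact Nat.div_div_self (Nat.dvd_of_mem_divisors hd) hm0
  rw [Finset.sum_const, nsmul_one] at hz
  exact (ZMod.natCast_eq_zero_iff_even).1 hz

/-- If `N ≡ 3` modulo `4`, then `N` has an even number of divisors prime to `5`. -/
theorem even_card_divisors_not_five_dvd {N : ℕ} (hN : N % 4 = 3) :
    Even (N.divisors.filter fun d => ¬ 5 ∣ d).card := by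
  have hN0 : N ≠ 0 := by omega
  obtain ⟨k, m, hm, rfl⟩ := Nat.exists_eq_pow_mul_and_not_dvd hN0 5 (by norm_num)
  have hm0 : m ≠ 0 := by rintro rfl; simp at hm
  have hm4 : m % 4 = 3 := by
    simpa [Nat.mul_mod, Nat.pow_mod] using hN
  convert even_card_divisors_of_mod_four_eq_three hm4 using 2
  ext d
  simp only [Finset.mem_filter, Nat.mem_divisors]
  constructor
  · rintro ⟨⟨hd, -⟩, h5⟩
    have hc : Nat.Coprime d (5 ^ k) :=
      ((Nat.Prime.coprime_iff_not_dvd Nat.prime_five).2 h5).symm.pow_right k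
    exact ⟨hc.dvd_of_dvd_mul_left hd, hm0⟩
  · rintro ⟨hd, -⟩
    exact ⟨⟨hd.mul_left _, hN0⟩, fun h => hm (h.trans hd)⟩

/-- Partitions of `N` with a single part size satisfying `P` correspond to the divisors of `N`
satisfying `P`. -/
theorem card_partitions_single_size {N : ℕ} (hN : N ≠ 0) (P : ℕ → Prop) [DecidablePred P] :
    (Finset.univ.filter fun p : Nat.Partition N =>
      (∀ x ∈ p.parts, P x) ∧ p.parts.toFinset.card = 1).card =
    (N.divisors.filter P).card := by
  symm
  have hq : ∀ d ∈ N.divisors.filter P, N / d ≠ 0 := fun d hd =>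
    (Nat.div_pos (Nat.divisor_le (Finset.mem_filter.1 hd).1)
      (Nat.pos_of_mem_divisors (Finset.mem_filter.1 hd).1)).ne'
  refine Finset.card_bij
    (fun d hd => ⟨Multiset.replicate (N / d) d, ?_, ?_⟩) ?_ ?_ ?_
  · intro i hi
    rw [Multiset.eq_of_mem_replicate hi]
    exact Nat.pos_of_mem_divisors (Finset.mem_filter.1 hd).1
  · rw [Multiset.sum_replicate, smul_eq_mul]
    exact Nat.div_mul_cancel (Nat.dvd_of_mem_divisors (Finset.mem_filter.1 hd).1)
  · intro d hd
    refine Finset.mem_filter.2 ⟨Finset.mem_univ _, fun x hx => ?_, ?_⟩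
    · rw [Multiset.eq_of_mem_replicate hx]
      exact (Finset.mem_filter.1 hd).2
    · simp [Multiset.toFinset_replicate, hq d hd]
  · intro a ha b hb hab
    have h : Multiset.replicate (N / a) a = Multiset.replicate (N / b) b :=
      congrArg Nat.Partition.parts hab
    have hmem : a ∈ Multiset.replicate (N / a) a := Multiset.mem_replicate.2 ⟨hq a ha, rfl⟩
    rw [h] at hmem
    exact Multiset.eq_of_mem_replicate hmem
  · intro p hp
    obtain ⟨-, hP, hc⟩ := Finset.mem_filter.1 hp
    obtain ⟨d, hd⟩ := Finset.card_eq_one.1 hc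
    have hmem : ∀ x, x ∈ p.parts ↔ x = d := fun x => by
      rw [← Multiset.mem_toFinset, hd, Finset.mem_singleton]
    have hrep := Multiset.eq_replicate_card.2 fun x hx => (hmem x).1 hx
    have hdp : d ∈ p.parts := (hmem d).2 rfl
    have hsum : N = p.parts.card * d := by
      have h := p.parts_sum
      rw [hrep, Multiset.sum_replicate, smul_eq_mul] at h
      exact h.symm
    refine ⟨d, Finset.mem_filter.2
      ⟨Nat.mem_divisors.2 ⟨Dvd.intro_left _ hsum.symm, hN⟩, hP d hdp⟩, ?_⟩
    apply Nat.Partition.ext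
    have hdiv : N / d = p.parts.card :=
      Nat.div_eq_of_eq_mul_left (p.parts_pos hdp) hsum
    simp only [hdiv]
    exact hrep.symm

theorem B54_mod4_4n3 (n : ℕ) : 4 ∣ biregOverpartitions 5 4 (4 * n + 3) := by
  set N := 4 * n + 3 with hNdef
  have hN : N % 4 = 3 := by omega
  have hN0 : N ≠ 0 := by omega
  unfold biregOverpartitions
  rw [← Finset.sum_filter, ← Finset.sum_filter_add_sum_filter_not _
    (fun p : Nat.Partition N => p.parts.toFinset.card = 1), Finset.filter_filter]
  refine dvd_add ?_ (Finset.dvd_sum fun p hp => ?_)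
  · rw [Finset.sum_congr rfl fun p hp => by rw [(Finset.mem_filter.1 hp).2.2],
      Finset.sum_const, card_partitions_single_size hN0 fun x => ¬ 5 ∣ x ∧ ¬ 4 ∣ x]
    have hfilter : (N.divisors.filter fun d => ¬ 5 ∣ d ∧ ¬ 4 ∣ d) =
        N.divisors.filter fun d => ¬ 5 ∣ d := by
      refine Finset.filter_congr fun d hd => and_iff_left fun h4 => ?_
      have := h4.trans (Nat.dvd_of_mem_divisors hd)
      omega
    rw [hfilter, smul_eq_mul]
    have heven := (even_card_divisors_not_five_dvd hN).two_dvd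
    omega
  · have hne : p.parts.toFinset.card ≠ 0 := by
      intro h
      rw [Finset.card_eq_zero, Multiset.toFinset_eq_empty] at h
      have hs := p.parts_sum
      rw [h, Multiset.sum_zero] at hs
      exact hN0 hs.symm
    have h1 := (Finset.mem_filter.1 hp).2
    exact pow_dvd_pow 2 (show 2 ≤ _ by omega)
end
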